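/- Under the axioms (1)–(9), the relation a ≤ b defined by ⟨Da⟩∘b = a is a partial order on A, and composition is order preserving in each of its arguments: if c ≤ d then ⟨a⟩∘c ≤ ⟨a⟩∘d for any a₁,…,aₙ, and if aᵢ ≤ bᵢ for every i ∈ {1,…,n} then ⟨a₁,…,aₙ⟩∘c ≤ ⟨b₁,…,bₙ⟩∘c for any c. -/

import Mathlib

/-!
Write `α(a)` and `δ(a)` for the operators `x ↦ ⟨Aa⟩∘x` and `x ↦ ⟨Da⟩∘x`. By (9), `δ(a) = α(Aⱼa)` for
every `j`, and for vectors of antidomains the chain in (6) collapses by (8), leaving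
`α(a)∘Aᵢb = α(α(a)∘b)∘Aᵢa` (`avec_anti`). It follows that `α(a)` and `δ(a)` are idempotent with
`α(a)δ(a) = δ(a)α(a) = 0`, so that (7) becomes a separation principle. Separation shows that all
the operators `α(a)` commute (`avec_comm`), and that `δ(b)∘a = a` implies `δ(a)δ(b) = δ(a)`
(`dvec_absorb`). Antisymmetry and transitivity are consequences of these two facts.

For monotonicity, let `uᵢ = ⟨a⟩∘πᵢ = δ(a₁)⋯δ(aₙ)∘aᵢ`, so `⟨a⟩∘x = ⟨u⟩∘x`. Separation upgrades (6) to
the twisted law for domain `⟨a⟩∘Dᵢc = δ(⟨a⟩∘c)∘uᵢ` (`comp_dom`), which gives monotonicity in the last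
argument. If `aᵢ = δ(aᵢ)∘bᵢ`, then `uᵢ = δ(a₁)⋯δ(aₙ)∘bᵢ`, whence
`⟨a⟩∘c = δ(a₁)⋯δ(aₙ)∘(⟨b⟩∘c)`, which lies below `⟨b⟩∘c` because restrictions only go down.
-/

/-- An algebra with an `(n+1)`-ary composition `⟨a₁,…,aₙ⟩∘b` and
`n` antidomain operations `A₁,…,Aₙ`. -/
structure MAlg (n : ℕ) (A : Type*) where
  comp : (Fin n → A) → A → A
  anti : Fin n → A → A

namespace MAlg

variable {n : ℕ} {A : Type*} [Inhabited A]

/-- `⟨Aa⟩ = (A₁a,…,Aₙa)`. -/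
def avec (M : MAlg n A) (a : A) : Fin n → A := fun i => M.anti i a

/-- `0 := ⟨Ab⟩∘b` (independent of `b` by axiom (3)). -/
def zero (M : MAlg n A) : A := M.comp (M.avec default) default

/-- `πᵢ := Aᵢ0`. -/
def pi (M : MAlg n A) (i : Fin n) : A := M.anti i M.zero

/-- `Dᵢa := Aᵢ(Aᵢa)`. -/
def dom (M : MAlg n A) (i : Fin n) (a : A) : A := M.anti i (M.anti i a)

/-- `⟨Da⟩ = (D₁a,…,Dₙa)`. -/
def dvec (M : MAlg n A) (a : A) : Fin n → A := fun i => M.dom i a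

/-- The chain `⟨Da₁⟩∘(⟨Da₂⟩∘(⋯∘(⟨Daₙ⟩∘t)))`. -/
def dchain (M : MAlg n A) (a : Fin n → A) (t : A) : A :=
  (List.ofFn a).foldr (fun u acc => M.comp (M.dvec u) acc) t

/-- Axioms (1)–(9). -/
structure Ax (M : MAlg n A) : Prop where
  /-- (1) superassociativity -/
  ax1 : ∀ (a b : Fin n → A) (c : A),
    M.comp (fun i => M.comp a (b i)) c = M.comp a (M.comp b c)
  /-- (2) `⟨π₁,…,πₙ⟩∘a = a` -/
  ax2 : ∀ a : A, M.comp M.pi a = a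
  /-- (3) `⟨Aa⟩∘a = ⟨Ab⟩∘b` -/
  ax3 : ∀ a b : A, M.comp (M.avec a) a = M.comp (M.avec b) b
  /-- (4) `⟨a₁,…,0,…,aₙ⟩∘b = 0` with `0` in any position -/
  ax4 : ∀ (a : Fin n → A) (i : Fin n) (b : A),
    M.comp (Function.update a i M.zero) b = M.zero
  /-- (5) `⟨a⟩∘0 = 0` -/
  ax5 : ∀ a : Fin n → A, M.comp a M.zero = M.zero
  /-- (6) the twisted laws for antidomain -/
  ax6 : ∀ (a : Fin n → A) (i : Fin n) (b : A),
    M.comp a (M.anti i b) = M.comp (M.avec (M.comp a b)) (M.dchain a (a i))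
  /-- (7) the quasiequation -/
  ax7 : ∀ a b c : A,
    M.comp (M.dvec a) b = M.comp (M.dvec a) c →
    M.comp (M.avec a) b = M.comp (M.avec a) c → b = c
  /-- (8) `⟨Da⟩∘a = a` -/
  ax8 : ∀ a : A, M.comp (M.dvec a) a = a
  /-- (9) `Aᵢ(Aⱼa) = Aᵢ(Aₖa)` -/
  ax9 : ∀ (i j k : Fin n) (a : A), M.anti i (M.anti j a) = M.anti i (M.anti k a)

end MAlg

namespace MAlg

namespace Ax

variable {n : ℕ} {A : Type*} [Inhabited A] {M : MAlg n A}

theorem avec_self (hM : M.Ax) (a : A) : M.comp (M.avec a) a = M.zero := hM.ax3 _ _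

theorem avec_zero (hM : M.Ax) (a : A) : M.comp (M.avec M.zero) a = a := hM.ax2 a

theorem avec_anti_eq (hM : M.Ax) (j : Fin n) (a : A) : M.avec (M.anti j a) = M.dvec a :=
  funext fun i => hM.ax9 i j i a

theorem dvec_anti_eq (hM : M.Ax) (i j : Fin n) (a : A) :
    M.dvec (M.anti j a) = M.dvec (M.anti i a) :=
  funext fun k => congrArg (M.anti k) (hM.ax9 k j i a)

/-- A vector of zeros composes to zero; this needs at least one argument. -/
theorem zero_comp (hM : M.Ax) (i : Fin n) (b : A) : M.comp (fun _ => M.zero) b = M.zero := by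
  have h := hM.ax4 (fun _ => M.zero) i b
  rwa [show Function.update (fun _ : Fin n => M.zero) i M.zero = fun _ => M.zero from
    Function.update_eq_self i (fun _ : Fin n => M.zero)] at h

theorem dchain_avec (hM : M.Ax) (i : Fin n) (a : A) :
    M.dchain (M.avec a) (M.anti i a) = M.anti i a := by
  have key : ∀ l : List A, (∀ u ∈ l, ∃ j, u = M.anti j a) →
      l.foldr (fun u acc => M.comp (M.dvec u) acc) (M.anti i a) = M.anti i a := by
    intro l
    induction l with
    | nil => intro _; rfl
    | cons u l ih =>
      intro h
      obtain ⟨j, hj⟩ := h u (by simp)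
      rw [List.foldr_cons, ih fun v hv => h v (by simp [hv]), hj, hM.dvec_anti_eq i j, hM.ax8]
  refine key _ fun u hu => ?_
  obtain ⟨j, hj⟩ := (List.mem_ofFn' _ _).1 hu
  exact ⟨j, hj.symm⟩

/-- The twisted law for a vector of antidomains, where the chain of domains collapses. -/
theorem avec_anti (hM : M.Ax) (a : A) (i : Fin n) (b : A) :
    M.comp (M.avec a) (M.anti i b) = M.comp (M.avec (M.comp (M.avec a) b)) (M.anti i a) := by
  rw [hM.ax6]
  exact congrArg _ (hM.dchain_avec i a)

/-- `avec_anti` as an identity between operators: `α(a)α(b) = α(α(a)∘b)α(a)`. -/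
theorem avec_avec (hM : M.Ax) (a b x : A) :
    M.comp (M.avec a) (M.comp (M.avec b) x) =
      M.comp (M.avec (M.comp (M.avec a) b)) (M.comp (M.avec a) x) := by
  rw [← hM.ax1, ← hM.ax1]
  exact congrArg (M.comp · x) (funext fun i => hM.avec_anti a i b)

theorem avec_anti_self (hM : M.Ax) (i : Fin n) (a : A) :
    M.comp (M.avec a) (M.anti i a) = M.anti i a := by
  rw [hM.avec_anti, hM.avec_self, hM.avec_zero]

theorem avec_idem (hM : M.Ax) (a x : A) :
    M.comp (M.avec a) (M.comp (M.avec a) x) = M.comp (M.avec a) x := by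
  rw [hM.avec_avec, hM.avec_self, hM.avec_zero]

theorem dvec_anti_self (hM : M.Ax) (i : Fin n) (a : A) :
    M.comp (M.dvec a) (M.anti i a) = M.zero := by
  rw [← hM.avec_anti_eq i, hM.avec_self]

theorem avec_dom_self (hM : M.Ax) (i : Fin n) (a : A) :
    M.comp (M.avec a) (M.dom i a) = M.zero := by
  rw [dom, hM.avec_anti, hM.avec_anti_self, hM.avec_self]

theorem dvec_avec (hM : M.Ax) (i : Fin n) (a x : A) :
    M.comp (M.dvec a) (M.comp (M.avec a) x) = M.zero := by
  rw [← hM.ax1, ← hM.zero_comp i x]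
  exact congrArg (M.comp · x) (funext fun j => hM.dvec_anti_self j a)

theorem avec_dvec (hM : M.Ax) (i : Fin n) (a x : A) :
    M.comp (M.avec a) (M.comp (M.dvec a) x) = M.zero := by
  rw [← hM.ax1, ← hM.zero_comp i x]
  exact congrArg (M.comp · x) (funext fun j => hM.avec_dom_self j a)

theorem dvec_idem (hM : M.Ax) (i : Fin n) (a x : A) :
    M.comp (M.dvec a) (M.comp (M.dvec a) x) = M.comp (M.dvec a) x := by
  rw [← hM.avec_anti_eq i, hM.avec_idem]

/-- Both sides vanish under `δ(b)` and agree under `α(b)`, so (7) identifies them. -/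
theorem avec_anti_comm (hM : M.Ax) (a b : A) (i : Fin n) :
    M.comp (M.avec a) (M.anti i b) = M.comp (M.avec b) (M.anti i a) := by
  apply hM.ax7 b
  · rw [hM.dvec_avec i, ← hM.avec_anti_eq i b, hM.avec_avec, hM.avec_self, hM.ax5]
  · rw [hM.avec_idem, hM.avec_avec, hM.avec_anti_self, ← hM.avec_anti]

theorem avec_comm (hM : M.Ax) (a b x : A) :
    M.comp (M.avec a) (M.comp (M.avec b) x) = M.comp (M.avec b) (M.comp (M.avec a) x) := by
  rw [← hM.ax1, ← hM.ax1]
  exact congrArg (M.comp · x) (funext fun i => hM.avec_anti_comm a b i)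

theorem dvec_comm (hM : M.Ax) (i : Fin n) (a b x : A) :
    M.comp (M.dvec a) (M.comp (M.dvec b) x) = M.comp (M.dvec b) (M.comp (M.dvec a) x) := by
  rw [← hM.avec_anti_eq i a, ← hM.avec_anti_eq i b, hM.avec_comm]

/-- If `a` is fixed by `δ(b)`, then `δ(a)δ(b) = δ(a)`. -/
theorem dvec_absorb (hM : M.Ax) (i : Fin n) {a b : A} (h : M.comp (M.dvec b) a = a) (x : A) :
    M.comp (M.dvec a) (M.comp (M.dvec b) x) = M.comp (M.dvec a) x := by
  have h0 : M.comp (M.avec b) a = M.zero := by rw [← h, hM.avec_dvec i]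
  -- `α(b)` annihilates `a`, hence `α(b)α(a) = α(b)` and `α(b)δ(a) = α(b)α(a)δ(a) = 0`.
  have h1 : ∀ y, M.comp (M.avec b) (M.comp (M.avec a) y) = M.comp (M.avec b) y := fun y => by
    rw [hM.avec_avec, h0, hM.avec_zero]
  have h2 : M.comp (M.avec b) (M.comp (M.dvec a) x) = M.zero := by
    rw [← h1, hM.avec_dvec i, hM.ax5]
  rw [hM.dvec_comm i]
  apply hM.ax7 b
  · rw [hM.dvec_idem i]
  · rw [hM.avec_dvec i, h2]

theorem restrict_le (hM : M.Ax) (i : Fin n) (p y : A) :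
    M.comp (M.dvec (M.comp (M.dvec p) y)) y = M.comp (M.dvec p) y := by
  rw [← hM.dvec_absorb i (hM.dvec_idem i p y), hM.ax8]

theorem le_trans' (hM : M.Ax) (i : Fin n) {a b c : A} (h1 : M.comp (M.dvec a) b = a)
    (h2 : M.comp (M.dvec b) c = b) : M.comp (M.dvec a) c = a := by
  have h : M.comp (M.dvec b) a = a := by rw [← h1, hM.dvec_comm i, hM.ax8]
  rw [← hM.dvec_absorb i h, h2, h1]

theorem comp_pi (hM : M.Ax) (a : Fin n → A) (i : Fin n) :
    M.comp a (M.pi i) = M.dchain a (a i) := by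
  rw [pi, hM.ax6, hM.ax5, hM.avec_zero]

/-- `⟨a⟩∘x = ⟨u⟩∘x`, where `uᵢ = δ(a₁)⋯δ(aₙ)∘aᵢ`. -/
theorem comp_eq_dchain (hM : M.Ax) (a : Fin n → A) (x : A) :
    M.comp (fun i => M.dchain a (a i)) x = M.comp a x := by
  simp only [← hM.comp_pi]
  rw [hM.ax1, hM.ax2]

/-- The twisted law for domain. -/
theorem comp_dom (hM : M.Ax) (a : Fin n → A) (i : Fin n) (c : A) :
    M.comp a (M.dom i c) = M.comp (M.dvec (M.comp a c)) (M.dchain a (a i)) := by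
  rw [dom, hM.ax6, hM.ax6]
  generalize M.comp a c = w
  generalize M.dchain a (a i) = u
  apply hM.ax7 w
  · rw [hM.dvec_idem i, ← hM.avec_anti_eq i w, hM.avec_avec, hM.avec_anti_eq, hM.dvec_avec i,
      hM.avec_zero]
  · rw [hM.avec_comm, hM.avec_self, hM.avec_dvec i]

/-- Monotonicity in the last argument. -/
theorem comp_mono_right (hM : M.Ax) (a : Fin n → A) {c d : A} (h : M.comp (M.dvec c) d = c) :
    M.comp (M.dvec (M.comp a c)) (M.comp a d) = M.comp a c := by
  conv_rhs => rw [← h, ← hM.ax1]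
  rw [← hM.comp_eq_dchain a d, ← hM.ax1]
  exact congrArg (M.comp · d) (funext fun i => (hM.comp_dom a i c).symm)

/-- Successive restriction to the domains of the members of a list. -/
def restrictList (M : MAlg n A) (l : List A) (t : A) : A :=
  l.foldr (fun u acc => M.comp (M.dvec u) acc) t

theorem restrictList_comp (hM : M.Ax) (l : List A) (v : Fin n → A) (c : A) :
    M.comp (fun i => restrictList M l (v i)) c = restrictList M l (M.comp v c) := by
  induction l with
  | nil => rfl
  | cons u l ih =>
    simp only [restrictList, List.foldr_cons] at ih ⊢
    rw [hM.ax1, ih]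

theorem restrictList_dvec (hM : M.Ax) (i : Fin n) (l : List A) (p t : A) :
    restrictList M l (M.comp (M.dvec p) t) = M.comp (M.dvec p) (restrictList M l t) := by
  induction l with
  | nil => rfl
  | cons u l ih =>
    simp only [restrictList, List.foldr_cons] at ih ⊢
    rw [ih, hM.dvec_comm i]

theorem restrictList_absorb (hM : M.Ax) (i : Fin n) {l : List A} {p : A} (hp : p ∈ l) (t : A) :
    restrictList M l (M.comp (M.dvec p) t) = restrictList M l t := by
  induction l with
  | nil => simp at hp
  | cons u l ih =>
    change M.comp (M.dvec u) (restrictList M l (M.comp (M.dvec p) t)) =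
      M.comp (M.dvec u) (restrictList M l t)
    rcases List.mem_cons.1 hp with rfl | hp
    · rw [hM.restrictList_dvec i, hM.dvec_idem i]
    · rw [ih hp]

theorem restrictList_le (hM : M.Ax) (i : Fin n) (l : List A) (t : A) :
    M.comp (M.dvec (restrictList M l t)) t = restrictList M l t := by
  induction l with
  | nil => exact hM.ax8 t
  | cons u l ih => exact hM.le_trans' i (hM.restrict_le i u _) ih

/-- Monotonicity in the vector argument. -/
theorem comp_mono_left (hM : M.Ax) (i₀ : Fin n) {a b : Fin n → A} (c : A)
    (h : ∀ i, M.comp (M.dvec (a i)) (b i) = a i) :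
    M.comp (M.dvec (M.comp a c)) (M.comp b c) = M.comp a c := by
  have hu : ∀ i, M.dchain a (a i) = restrictList M (List.ofFn a) (b i) := fun i => by
    rw [← hM.restrictList_absorb i₀ ((List.mem_ofFn' _ _).2 ⟨i, rfl⟩) (b i), h]
    rfl
  have hac : M.comp a c = restrictList M (List.ofFn a) (M.comp b c) := by
    rw [← hM.comp_eq_dchain, ← hM.restrictList_comp]
    exact congrArg (M.comp · c) (funext hu)
  rw [hac]
  exact hM.restrictList_le i₀ _ _

end Ax

end MAlg

/-- The relation `a ≤ b` iff `⟨Da⟩∘b = a` is a partial order, and composition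
is order preserving in each of its arguments. -/
theorem natural_partial_order {n : ℕ} (hn : 1 ≤ n) {A : Type*} [Inhabited A]
    (M : MAlg n A) (hM : M.Ax) :
    (∀ a : A, M.comp (M.dvec a) a = a) ∧
    (∀ a b : A, M.comp (M.dvec a) b = a → M.comp (M.dvec b) a = b → a = b) ∧
    (∀ a b c : A, M.comp (M.dvec a) b = a → M.comp (M.dvec b) c = b →
      M.comp (M.dvec a) c = a) ∧
    (∀ (a : Fin n → A) (c d : A), M.comp (M.dvec c) d = c →
      M.comp (M.dvec (M.comp a c)) (M.comp a d) = M.comp a c) ∧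
    (∀ (a b : Fin n → A) (c : A), (∀ i, M.comp (M.dvec (a i)) (b i) = a i) →
      M.comp (M.dvec (M.comp a c)) (M.comp b c) = M.comp a c) := by
  have i : Fin n := ⟨0, hn⟩
  refine ⟨hM.ax8, fun a b hab hba => ?_, fun a b c => hM.le_trans' i,
    fun a c d => hM.comp_mono_right a, fun a b c => hM.comp_mono_left i c⟩
  rw [← hba, ← hab, hM.dvec_comm i, hM.ax8, hab]
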